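/- arXiv:2103.07988 — 3 statements merged into one kernel-verified Lean document; each statement's English description precedes it below -/
import Mathlib

section
/- For n ≥ 2 qubits, define the following 2ⁿ×2ⁿ complex matrices via Kronecker products of the single-qubit Pauli matrices X = [[0,1],[1,0]] and Z = [[1,0],[0,−1]] and the 2×2 identity I₂: H_1 = X ⊗ I₂^{⊗(n−1)}, H_2 = Z ⊗ Z ⊗ I₂^{⊗(n−2)}, and for 3 ≤ j ≤ n, H_j = Z ⊗ X^{⊗(j−2)} ⊗ Z ⊗ I₂^{⊗(n−j)}. Then the n matrices H_1,…,H_n are pairwise anticommuting involutions: H_j² = I for every j, and H_i H_j = −H_j H_i for all i ≠ j. -/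
/-!
Kronecker products multiply site by site, so both claims reduce to `2 × 2` matrices. Every
tensor factor of every `H_j` is `X`, `Z` or `1`, hence squares to `1`, and so does `H_j`. If
`i < j`, the factors of `H_i` and `H_j` commute at every site except one, the last site where
`H_i` acts nontrivially: there (site `i - 1`, counting from `0`) one factor is `X` and the other
is `Z`. Since `X Z = -Z X`, and the Kronecker product is linear in each factor, the two terms
anticommute.
-/

/-- Single-qubit Pauli `X`. -/
def pauliX : Matrix (Fin 2) (Fin 2) ℂ := !![0, 1; 1, 0]

/-- Single-qubit Pauli `Z`. -/
def pauliZ : Matrix (Fin 2) (Fin 2) ℂ := !![1, 0; 0, -1]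

/-- The `n`-fold Kronecker (tensor) product of single-qubit matrices `P 0 ⊗ ⋯ ⊗ P (n−1)`,
realized on the index type `Fin n → Fin 2` (of cardinality `2ⁿ`). -/
def tensorProd (n : ℕ) (P : Fin n → Matrix (Fin 2) (Fin 2) ℂ) :
    Matrix (Fin n → Fin 2) (Fin n → Fin 2) ℂ :=
  Matrix.of fun f g => ∏ i, P i (f i) (g i)

/-- The `j`-th term (`1 ≤ j ≤ n`) of the paper's `n`-qubit Hamiltonian:
`H₁ = X ⊗ I^{⊗(n−1)}`, `H₂ = Z ⊗ Z ⊗ I^{⊗(n−2)}`, and for `3 ≤ j ≤ n`,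
`H_j = Z ⊗ X^{⊗(j−2)} ⊗ Z ⊗ I^{⊗(n−j)}`. -/
def hamTerm (n j : ℕ) : Matrix (Fin n → Fin 2) (Fin n → Fin 2) ℂ :=
  if j = 1 then tensorProd n (fun i => if (i : ℕ) = 0 then pauliX else 1)
  else if j = 2 then tensorProd n (fun i => if (i : ℕ) ≤ 1 then pauliZ else 1)
  else tensorProd n (fun i =>
    if (i : ℕ) = 0 then pauliZ
    else if (i : ℕ) = j - 1 then pauliZ
    else if (i : ℕ) < j - 1 then pauliX
    else 1)

theorem pauliX_mul_self : pauliX * pauliX = 1 := by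
  ext a b; fin_cases a <;> fin_cases b <;> simp [pauliX]

theorem pauliZ_mul_self : pauliZ * pauliZ = 1 := by
  ext a b; fin_cases a <;> fin_cases b <;> simp [pauliZ]

theorem pauliX_mul_pauliZ : pauliX * pauliZ = -(pauliZ * pauliX) := by
  ext a b; fin_cases a <;> fin_cases b <;> simp [pauliX, pauliZ]

theorem pauliZ_mul_pauliX : pauliZ * pauliX = -(pauliX * pauliZ) := by
  rw [pauliX_mul_pauliZ, neg_neg]

theorem tensorProd_mul (n : ℕ) (P Q : Fin n → Matrix (Fin 2) (Fin 2) ℂ) :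
    tensorProd n P * tensorProd n Q = tensorProd n (fun i => P i * Q i) := by
  ext f g
  simp only [tensorProd, Matrix.mul_apply, Matrix.of_apply]
  rw [Finset.prod_univ_sum, Fintype.piFinset_univ]
  simp only [Finset.prod_mul_distrib]

theorem tensorProd_one (n : ℕ) : tensorProd n (fun _ => 1) = 1 := by
  ext f g
  simp only [tensorProd, Matrix.of_apply, Matrix.one_apply, Finset.prod_ite_zero,
    Finset.prod_const_one, Finset.mem_univ, true_imp_iff, funext_iff]

/-- Negating a single tensor factor negates the Kronecker product. -/
theorem tensorProd_eq_neg {n : ℕ} {P Q : Fin n → Matrix (Fin 2) (Fin 2) ℂ} (k : Fin n)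
    (hk : P k = -Q k) (h : ∀ i, i ≠ k → P i = Q i) :
    tensorProd n P = -tensorProd n Q := by
  ext f g
  simp only [tensorProd, Matrix.of_apply, Matrix.neg_apply]
  rw [← Finset.mul_prod_erase _ _ (Finset.mem_univ k),
    ← Finset.mul_prod_erase _ (fun i => Q i (f i) (g i)) (Finset.mem_univ k), hk,
    Matrix.neg_apply, neg_mul]
  congr 2
  refine Finset.prod_congr rfl fun i hi => ?_
  rw [h i (Finset.ne_of_mem_erase hi)]

/-- The tensor factor of `H_j` at site `i`, with sites numbered from `0`. The case `j = 2` is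
absorbed in the general one, the string of `X`s being empty. -/
def hamFactor (j i : ℕ) : Matrix (Fin 2) (Fin 2) ℂ :=
  if j = 1 then (if i = 0 then pauliX else 1)
  else if i = 0 ∨ i = j - 1 then pauliZ
  else if i < j - 1 then pauliX
  else 1

theorem hamTerm_eq (n j : ℕ) : hamTerm n j = tensorProd n (fun i => hamFactor j i) := by
  unfold hamTerm hamFactor
  split_ifs with h1 h2
  · rfl
  · congr 1; funext i; split_ifs <;> first | rfl | omega
  · congr 1; funext i; split_ifs <;> first | rfl | omega

theorem hamFactor_mul_self (j i : ℕ) : hamFactor j i * hamFactor j i = 1 := by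
  unfold hamFactor
  split_ifs <;> simp [pauliX_mul_self, pauliZ_mul_self]

theorem hamFactor_anticomm {i j : ℕ} (hi : 1 ≤ i) (hij : i < j) :
    hamFactor i (i - 1) * hamFactor j (i - 1) =
      -(hamFactor j (i - 1) * hamFactor i (i - 1)) := by
  unfold hamFactor
  split_ifs <;> first | omega | exact pauliX_mul_pauliZ | exact pauliZ_mul_pauliX

theorem hamFactor_comm {i j k : ℕ} (hi : 1 ≤ i) (hij : i < j) (hk : k ≠ i - 1) :
    hamFactor i k * hamFactor j k = hamFactor j k * hamFactor i k := by
  unfold hamFactor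
  split_ifs <;> first | rfl | omega | simp

theorem hamTerm_anticomm_of_lt {n i j : ℕ} (hi : 1 ≤ i) (hij : i < j) (hj : j ≤ n) :
    hamTerm n i * hamTerm n j = -(hamTerm n j * hamTerm n i) := by
  simp only [hamTerm_eq, tensorProd_mul]
  exact tensorProd_eq_neg ⟨i - 1, by omega⟩ (hamFactor_anticomm hi hij)
    fun k hk => hamFactor_comm hi hij fun h => hk (Fin.ext h)

/-- The `n` matrices `H₁,…,H_n` are pairwise anticommuting involutions. -/
theorem hamTerm_involution_and_anticommute (n : ℕ) (hn : 2 ≤ n) :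
    (∀ j, 1 ≤ j → j ≤ n → hamTerm n j ^ 2 = 1) ∧
    (∀ i j, 1 ≤ i → i ≤ n → 1 ≤ j → j ≤ n → i ≠ j →
      hamTerm n i * hamTerm n j = -(hamTerm n j * hamTerm n i)) := by
  refine ⟨fun j _ _ => ?_, fun i j hi hin hj hjn hij => ?_⟩
  · simp only [pow_two, hamTerm_eq, tensorProd_mul, hamFactor_mul_self, tensorProd_one]
  · rcases lt_or_gt_of_ne hij with h | h
    · exact hamTerm_anticomm_of_lt hi h hjn
    · rw [hamTerm_anticomm_of_lt hj h hin, neg_neg]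
end

section
/- Let c ≥ √3 be a real number and set s = (2c − √(c² − 3))/(1 + c²). Then 0 ≤ s ≤ 1, 2 − c·s ≥ 0, and √(1 − s²) + c·s = 2. (Consequently, for a Hamiltonian with mutually anticommuting terms, choosing the segment time t_seg with sin(t_seg β_s) = s and cos(t_seg β_s) = √(1−s²) makes the LCU normalization |cos(t_seg β_s)| + (α/β_s)|sin(t_seg β_s)| exactly equal to 2, where c = α/β_s.) -/
/-!
The number `s` is the smaller root of `(1 + c²) s² - 4 c s + 3 = 0`, which is the equation
`1 - s² = (2 - c s)²` expanded. Since `2 - c s = (2 + c √(c² - 3)) / (1 + c²)` is nonnegative,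
taking square roots yields `√(1 - s²) = 2 - c s`, and `s² ≤ 1` is read off the same equation.
-/

/-- For `c ≥ √3` and `s = (2c − √(c² − 3))/(1 + c²)`, one has `0 ≤ s ≤ 1`,
`2 − c·s ≥ 0`, and `√(1 − s²) + c·s = 2`. -/
theorem segment_time_normalization (c : ℝ) (hc : Real.sqrt 3 ≤ c)
    (s : ℝ) (hs : s = (2 * c - Real.sqrt (c ^ 2 - 3)) / (1 + c ^ 2)) :
    0 ≤ s ∧ s ≤ 1 ∧ 2 - c * s ≥ 0 ∧ Real.sqrt (1 - s ^ 2) + c * s = 2 := by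
  have hc0 : 0 ≤ c := (Real.sqrt_nonneg 3).trans hc
  have hc3 : 3 ≤ c ^ 2 := (Real.sqrt_le_left hc0).mp hc
  have hr2 : Real.sqrt (c ^ 2 - 3) ^ 2 = c ^ 2 - 3 := Real.sq_sqrt (by linarith)
  have hr0 : 0 ≤ Real.sqrt (c ^ 2 - 3) := Real.sqrt_nonneg _
  set r := Real.sqrt (c ^ 2 - 3)
  have hd : 0 < 1 + c ^ 2 := by positivity
  have hrc : r ≤ c := abs_le_of_sq_le_sq' (by linarith) hc0 |>.2
  have hs0 : 0 ≤ s := by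
    rw [hs]
    exact div_nonneg (by linarith) hd.le
  have hcs : 2 - c * s = (2 + c * r) / (1 + c ^ 2) := by
    rw [hs]
    field_simp
    ring
  have hcs0 : 0 ≤ 2 - c * s := by
    rw [hcs]
    positivity
  have key : 1 - s ^ 2 = (2 - c * s) ^ 2 := by
    rw [hcs, hs]
    field_simp
    linear_combination (-(1 + c ^ 2)) * hr2
  refine ⟨hs0, ?_, hcs0, ?_⟩
  · nlinarith [sq_nonneg (2 - c * s)]
  · rw [key, Real.sqrt_sq hcs0]
    ring
end

section
/- For every real c with √3 ≤ c ≤ √L (L ≥ 3), the number of time segments in the modified LCU method for a pairwise anticommuting Hamiltonian is O(√L): precisely, π / arcsin[ (2c − √(c² − 3))/(1 + c²) ] ≤ π·(1 + c²)/(2c − √(c² − 3)) ≤ π·(1/√3 + √L). -/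
/-!
Write `s = √(c² - 3)`. Since `(2c - s)(2c + s) = 3(1 + c²)`, the number `(2c - s)/(1 + c²)` equals
`3/(2c + s)`. It lies in `(0, 1]` because `2c ≥ 2√3 > 3`, so `arcsin x ≥ x` gives the first bound.
Its reciprocal `(2c + s)/3` is at most `c ≤ √L` because `s ≤ c`, which gives the second bound.
-/

/-- The number of time segments in the modified LCU method is `O(√L)`: for
`√3 ≤ c ≤ √L` (with `L ≥ 3`),
`π / arcsin[(2c − √(c²−3))/(1+c²)] ≤ π(1+c²)/(2c − √(c²−3)) ≤ π(1/√3 + √L)`. -/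
theorem segment_count_bound (L : ℕ) (hL : 3 ≤ L)
    (c : ℝ) (hc₁ : Real.sqrt 3 ≤ c) (hc₂ : c ≤ Real.sqrt L) :
    Real.pi / Real.arcsin ((2 * c - Real.sqrt (c ^ 2 - 3)) / (1 + c ^ 2)) ≤
        Real.pi * (1 + c ^ 2) / (2 * c - Real.sqrt (c ^ 2 - 3)) ∧
      Real.pi * (1 + c ^ 2) / (2 * c - Real.sqrt (c ^ 2 - 3)) ≤
        Real.pi * (1 / Real.sqrt 3 + Real.sqrt L) := by
  have h3 : (3 / 2 : ℝ) ≤ Real.sqrt 3 := Real.le_sqrt_of_sq_le (by norm_num)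
  have hc : 3 / 2 ≤ c := h3.trans hc₁
  have hcsq : 3 ≤ c ^ 2 := (Real.sqrt_le_left (by linarith)).1 hc₁
  have hs2 : Real.sqrt (c ^ 2 - 3) ^ 2 = c ^ 2 - 3 := Real.sq_sqrt (by linarith)
  have hs0 : 0 ≤ Real.sqrt (c ^ 2 - 3) := Real.sqrt_nonneg _
  have hsc : Real.sqrt (c ^ 2 - 3) ≤ c := Real.sqrt_le_iff.2 ⟨by linarith, by linarith⟩
  set s := Real.sqrt (c ^ 2 - 3)
  have hd : 0 < 2 * c - s := by linarith
  have hn : 0 < 1 + c ^ 2 := by positivity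
  have hx0 : 0 < (2 * c - s) / (1 + c ^ 2) := div_pos hd hn
  have hx1 : (2 * c - s) / (1 + c ^ 2) ≤ 1 := by
    rw [div_le_one hn]
    nlinarith [mul_nonneg hd.le (by linarith : 0 ≤ 2 * c + s - 3)]
  have hinv : (1 + c ^ 2) / (2 * c - s) = (2 * c + s) / 3 := by
    rw [div_eq_div_iff hd.ne' (by norm_num)]
    linear_combination hs2
  constructor
  · have harc : (2 * c - s) / (1 + c ^ 2) ≤ Real.arcsin ((2 * c - s) / (1 + c ^ 2)) := by
      refine (Real.le_arcsin_iff_sin_le' ⟨?_, ?_⟩).2 (Real.sin_le hx0.le)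
      · linarith [Real.pi_pos]
      · linarith [Real.pi_gt_three]
    calc Real.pi / Real.arcsin ((2 * c - s) / (1 + c ^ 2))
        ≤ Real.pi / ((2 * c - s) / (1 + c ^ 2)) :=
          div_le_div_of_nonneg_left Real.pi_pos.le hx0 harc
      _ = Real.pi * (1 + c ^ 2) / (2 * c - s) := div_div_eq_mul_div _ _ _
  · rw [mul_div_assoc, hinv]
    refine mul_le_mul_of_nonneg_left ?_ Real.pi_pos.le
    have : 0 ≤ 1 / Real.sqrt 3 := by positivity
    linarith
end
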